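/- arXiv:1111.0650 — 3 statements merged into one kernel-verified Lean document; each statement's English description precedes it below -/
import Mathlib

section
/- Let x be a uniformly recurrent sequence over a finite alphabet A and let u be a nonempty prefix of x. Then the set ℛ_{x,u} of return words to u is a code; that is, the morphism Θ_{x,u} : R_{x,u}* → A* is injective. -/
/-!
Call `r` a *separated* word for `u` when `r` is nonempty, `u` is a prefix of `r ++ u`, and `u` is
not a prefix of `q ++ u` for any proper nonempty suffix `q` of `r`; that is, the word `r ++ u`
contains `u` exactly at its two ends. Return words to `u` are separated, because `r ++ u` is the
factor of `x` spanning two successive occurrences of `u`.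

If `w` is a concatenation of separated words, then `u` is a prefix of `w ++ u`. Suppose
`r ++ s = r' ++ s'` with `r, r'` separated, `s, s'` concatenations of separated words, and
`r' = r ++ q` with `q` nonempty. Then `s = q ++ s'`, so `u` is a prefix of `q ++ s' ++ u`. As `u` is
also a prefix of `s' ++ u`, both `u` and `q ++ u` are prefixes of the same word, so `u` is a prefix
of `q ++ u`, contradicting separation. Hence `r = r'`, and induction gives unique decodability.
Finally `Θ_{x,u}` is injective on letters, since the label of `mₙ` depends only on the word `mₙ`.
-/

namespace Rauzy

variable {A B Γ : Type*}

/-- The factor `x_[i, i+n)` of length `n` of the sequence `x`, starting at position `i`. -/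
def factorAt (x : ℕ → A) (i n : ℕ) : List A :=
  (List.range n).map fun k => x (i + k)

/-- The word `w` occurs in the sequence `x` at position `i`. -/
def OccursAt (x : ℕ → A) (w : List A) (i : ℕ) : Prop :=
  factorAt x i w.length = w

/-- The word `w` is a factor of the sequence `x`. -/
def IsFactor (x : ℕ → A) (w : List A) : Prop :=
  ∃ i, OccursAt x w i

/-- The word `w` is a prefix of the sequence `x`. -/
def IsPrefixSeq (x : ℕ → A) (w : List A) : Prop :=
  OccursAt x w 0

/-- The sequence `x` is uniformly recurrent: every factor occurs with bounded gaps. -/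
def UniformlyRecurrent (x : ℕ → A) : Prop :=
  ∀ w : List A, IsFactor x w → ∃ N, ∀ i, ∃ j, i ≤ j ∧ j < i + N ∧ OccursAt x w j

/-- `i < j` are two successive occurrences of `u` in `x`. -/
def SuccessiveOccs (x : ℕ → A) (u : List A) (i j : ℕ) : Prop :=
  i < j ∧ OccursAt x u i ∧ OccursAt x u j ∧ ∀ k, i < k → k < j → ¬ OccursAt x u k

/-- The word `w` is a return word to `u` in `x`. -/
def IsReturnWord (x : ℕ → A) (u w : List A) : Prop :=
  ∃ i j, SuccessiveOccs x u i j ∧ w = factorAt x i (j - i)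

/-- The set `ℛ_{x,u}` of return words to `u` in `x`. -/
def returnWords (x : ℕ → A) (u : List A) : Set (List A) :=
  {w | IsReturnWord x u w}

/-- The next occurrence of `u` in `x` strictly after position `i`. -/
noncomputable def nextOcc (x : ℕ → A) (u : List A) (i : ℕ) : ℕ :=
  sInf {j | i < j ∧ OccursAt x u j}

/-- The increasing enumeration of the occurrences of the prefix `u` in `x`
(position `0` is an occurrence since `u` is a prefix). -/
noncomputable def occSeq (x : ℕ → A) (u : List A) : ℕ → ℕ
  | 0 => 0
  | n + 1 => nextOcc x u (occSeq x u n)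

/-- The `n`-th return word `mₙ` in the decomposition `x = m₀m₁m₂⋯` of `x`
into return words to the prefix `u`. -/
noncomputable def retWord (x : ℕ → A) (u : List A) (n : ℕ) : List A :=
  factorAt x (occSeq x u n) (occSeq x u (n + 1) - occSeq x u n)

/-- The first index `n` such that `mₙ = w` in the decomposition of `x` into
return words to `u`. -/
noncomputable def firstIdx (x : ℕ → A) (u w : List A) : ℕ :=
  sInf {n | retWord x u n = w}

open Classical in
/-- The derived sequence `D_u(x)` of `x` on the prefix `u`, with the return words
labelled `0, 1, 2, …` in the order of their first appearance in the decomposition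
`x = m₀m₁m₂⋯` : the label of `mₙ` is the number of distinct return words appearing
strictly before the first occurrence of `mₙ`. -/
noncomputable def derivedSeq (x : ℕ → A) (u : List A) (n : ℕ) : ℕ :=
  ((Finset.range (firstIdx x u (retWord x u n))).image (retWord x u)).card

/-- The alphabet `R_{x,u} = {0, …, #ℛ_{x,u} - 1} ⊆ ℕ` of the derived sequence. -/
def derivedAlphabet (x : ℕ → A) (u : List A) : Set ℕ :=
  Set.range (derivedSeq x u)

/-- The morphism `Θ_{x,u}` on letters: the return word labelled `k`. -/
noncomputable def thetaLetter (x : ℕ → A) (u : List A) (k : ℕ) : List A :=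
  retWord x u (sInf {n | derivedSeq x u n = k})

/-- The canonical extension of a letter-to-word map to a monoid morphism on words. -/
def apply (f : A → List B) (w : List A) : List B :=
  (w.map f).flatten

/-- The morphism `Θ_{x,u} : R_{x,u}* → A*` on words. -/
noncomputable def theta (x : ℕ → A) (u : List A) (l : List ℕ) : List A :=
  apply (thetaLetter x u) l

/-- `y = f(x)` for an infinite sequence `x`: the image under `f` of every prefix
of `x` is a prefix of `y`. -/
def SeqImage (f : A → List B) (x : ℕ → A) (y : ℕ → B) : Prop :=
  ∀ n, IsPrefixSeq y (apply f (factorAt x 0 n))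

/-- The iterate `σⁿ` of a substitution, on letters. -/
def substIter (σ : A → List A) : ℕ → A → List A
  | 0 => fun a => [a]
  | n + 1 => fun a => apply σ (substIter σ n a)

/-- `σ` is prolongable on the letter `a`: `σ(a) = a·w` with `w` nonempty, and
`|σⁿ(a)| → ∞`. -/
def Prolongable (σ : A → List A) (a : A) : Prop :=
  (∃ w : List A, w ≠ [] ∧ σ a = a :: w) ∧
    Filter.Tendsto (fun n => (substIter σ n a).length) Filter.atTop Filter.atTop

/-- The incidence matrix of a substitution: entry `(i, j)` is the number of
occurrences of the letter `i` in `σ(j)`. -/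
def incMatrix [Fintype A] [DecidableEq A] (σ : A → List A) : Matrix A A ℕ :=
  Matrix.of fun i j => (σ j).count i

/-- A substitution is primitive if some power of its incidence matrix has all
entries strictly positive. -/
def Primitive [Fintype A] [DecidableEq A] (σ : A → List A) : Prop :=
  ∃ k, 0 < k ∧ ∀ i j, 0 < (incMatrix σ ^ k) i j

/-- The sequence `x` is (purely) periodic. -/
def IsPeriodic (x : ℕ → A) : Prop :=
  ∃ p, 0 < p ∧ ∀ n, x (n + p) = x n

/-- The sequence `x` is ultimately periodic. -/
def IsUltimatelyPeriodic (x : ℕ → A) : Prop :=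
  ∃ N p, 0 < p ∧ ∀ n, N ≤ n → x (n + p) = x n

/-- `|σ| = max_{a ∈ A} |σ(a)|`. -/
def mSize [Fintype A] (σ : A → List A) : ℕ :=
  Finset.univ.sup fun a => (σ a).length

/-- `min_{a ∈ A} |σ(a)|`. -/
noncomputable def minSize [Fintype A] [Nonempty A] (σ : A → List A) : ℕ :=
  Finset.univ.inf' Finset.univ_nonempty fun a => (σ a).length

/-- `R_σ`: the maximal difference between two successive occurrences of a word of
length 2 in any fixed point of `σ`. -/
noncomputable def Rconst (σ : A → List A) : ℕ :=
  sSup {r | ∃ x : ℕ → A, SeqImage σ x x ∧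
    ∃ w i j, w.length = 2 ∧ SuccessiveOccs x w i j ∧ r = j - i}

/-- `Q_σ = max( max_{0 ≤ n ≤ (d−1)d^d + 1} |σⁿ| / min_{a∈A} |σⁿ(a)| , |σ| )`. -/
noncomputable def Qconst [Fintype A] [Nonempty A] (σ : A → List A) : ℝ :=
  max
    ((Finset.range ((Fintype.card A - 1) * Fintype.card A ^ Fintype.card A + 2)).sup'
      (Finset.nonempty_range_iff.mpr (by omega))
      fun n => (mSize (substIter σ n) : ℝ) / (minSize (substIter σ n) : ℝ))
    (mSize σ : ℝ)

/-- `K_σ = Q_σ · R_σ · |σ|`. -/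
noncomputable def Kconst [Fintype A] [Nonempty A] (σ : A → List A) : ℝ :=
  Qconst σ * Rconst σ * mSize σ

/-- The index `m` such that `occSeq x u m = L`, i.e. the number of complete return
words to `u` composing the prefix of length `L` of `x`. -/
noncomputable def posIdx (x : ℕ → A) (u : List A) (L : ℕ) : ℕ :=
  sInf {m | occSeq x u m = L}

/-- The return substitution `σ_u : R_{x,u}* → R_{x,u}*`, on letters: it is the unique
substitution satisfying `Θ_{x,u} ∘ σ_u = σ ∘ Θ_{x,u}`. -/
noncomputable def returnSubst (σ : A → List A) (x : ℕ → A) (u : List A) (k : ℕ) : List ℕ :=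
  let n := sInf {n | derivedSeq x u n = k}
  let p := posIdx x u (apply σ (factorAt x 0 (occSeq x u n))).length
  let q := posIdx x u (apply σ (factorAt x 0 (occSeq x u (n + 1)))).length
  (List.range (q - p)).map fun t => derivedSeq x u (p + t)

/-- For a coding `φ`, the morphism `λ_u : R_{x,u}* → R_{φ(x),φ(u)}*`, on letters:
it is the unique morphism satisfying `φ ∘ Θ_{x,u} = Θ_{φ(x),φ(u)} ∘ λ_u`. -/
noncomputable def lambdaMorph (φ : A → B) (x : ℕ → A) (u : List A) (k : ℕ) : List ℕ :=
  let n := sInf {n | derivedSeq x u n = k}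
  let p := posIdx (fun i => φ (x i)) (u.map φ) (occSeq x u n)
  let q := posIdx (fun i => φ (x i)) (u.map φ) (occSeq x u (n + 1))
  (List.range (q - p)).map fun t => derivedSeq (fun i => φ (x i)) (u.map φ) (p + t)

/-- The Parikh vector (abelianization) of a word. -/
def parikh [DecidableEq A] (w : List A) : A → ℤ :=
  fun b => (w.count b : ℤ)

/-- The word `r ++ u` has `u` as a prefix, and `u` occurs in it only at positions `0` and
`r.length`. Internal occurrences are encoded by proper nonempty suffixes `q` of `r`. -/
def Separated {A : Type*} (u r : List A) : Prop :=
  r ≠ [] ∧ u <+: r ++ u ∧ ∀ p q, r = p ++ q → p ≠ [] → q ≠ [] → ¬ u <+: q ++ u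

theorem prefix_flatten_append {A : Type*} {u : List A} {L : List (List A)}
    (hL : ∀ r ∈ L, Separated u r) : u <+: L.flatten ++ u := by
  induction L with
  | nil => simp
  | cons r L ih =>
    have h1 := (hL r (by simp)).2.1
    have h2 := ih fun s hs => hL s (by simp [hs])
    rw [List.flatten_cons, List.append_assoc]
    exact h1.trans ((List.prefix_append_right_inj r).2 h2)

/-- A separated word beginning a concatenation of separated words cannot be properly extended
to another separated word beginning the same concatenation. -/
theorem Separated.suffix_eq_nil {A : Type*} {u r q s s' : List A} (hr : Separated u r)
    (hrq : Separated u (r ++ q)) (hs : u <+: s ++ u) (hs' : u <+: s' ++ u)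
    (h : s = q ++ s') : q = [] := by
  by_contra hq
  refine hrq.2.2 r q rfl hr.1 hq ?_
  subst h
  rw [List.append_assoc] at hs
  exact List.prefix_of_prefix_length_le hs ((List.prefix_append_right_inj q).2 hs') (by simp)

theorem flatten_injOn_separated {A : Type*} {u : List A} :
    ∀ {L M : List (List A)}, (∀ r ∈ L, Separated u r) → (∀ r ∈ M, Separated u r) →
      L.flatten = M.flatten → L = M
  | [], [], _, _, _ => rfl
  | [], r :: M, _, hM, h => by
    have := (hM r (by simp)).1
    simp_all
  | r :: L, [], hL, _, h => by
    have := (hL r (by simp)).1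
    simp_all
  | r :: L, r' :: M, hL, hM, h => by
    have hr := hL r (by simp)
    have hr' := hM r' (by simp)
    have hL' : ∀ s ∈ L, Separated u s := fun s hs => hL s (by simp [hs])
    have hM' : ∀ s ∈ M, Separated u s := fun s hs => hM s (by simp [hs])
    have pL := prefix_flatten_append hL'
    have pM := prefix_flatten_append hM'
    rw [List.flatten_cons, List.flatten_cons] at h
    rcases List.append_eq_append_iff.1 h with ⟨q, rfl, hq⟩ | ⟨q, rfl, hq⟩
    · obtain rfl := hr.suffix_eq_nil hr' pL pM hq
      rw [flatten_injOn_separated hL' hM' (by simpa using hq)]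
      simp
    · obtain rfl := hr'.suffix_eq_nil hr pM pL hq
      rw [flatten_injOn_separated hL' hM' (by simpa using hq.symm)]
      simp

@[simp] theorem length_factorAt {A : Type*} (x : ℕ → A) (i n : ℕ) :
    (factorAt x i n).length = n := by
  simp [factorAt]

theorem factorAt_add {A : Type*} (x : ℕ → A) (i m n : ℕ) :
    factorAt x i (m + n) = factorAt x i m ++ factorAt x (i + m) n := by
  simp [factorAt, List.range_add, Nat.add_assoc]

theorem prefix_factorAt_iff {A : Type*} {x : ℕ → A} {u : List A} {i n : ℕ} :
    u <+: factorAt x i (u.length + n) ↔ OccursAt x u i := by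
  rw [factorAt_add]
  constructor
  · intro h
    exact ((List.prefix_of_prefix_length_le h (List.prefix_append _ _) (by simp)).eq_of_length
      (by simp)).symm
  · intro h
    rw [show factorAt x i u.length = u from h]
    exact List.prefix_append _ _

theorem SuccessiveOccs.separated {A : Type*} {x : ℕ → A} {u : List A} {i j : ℕ}
    (h : SuccessiveOccs x u i j) : Separated u (factorAt x i (j - i)) := by
  obtain ⟨hij, hi, hj, hno⟩ := h
  have hj' : factorAt x j u.length = u := hj
  refine ⟨?_, ?_, ?_⟩
  · intro h0
    have := congrArg List.length h0
    simp at this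
    omega
  · have := factorAt_add x i (j - i) u.length
    rw [Nat.add_sub_cancel' hij.le, hj'] at this
    rw [← this, Nat.add_comm]
    exact prefix_factorAt_iff.2 hi
  · intro p q hpq hp hq hu
    have hlen := congrArg List.length hpq
    simp only [length_factorAt, List.length_append] at hlen
    have hp' := List.length_pos_iff.2 hp
    have hq' := List.length_pos_iff.2 hq
    rw [hlen, factorAt_add] at hpq
    have hqf := (List.append_inj hpq (by simp)).2
    have := factorAt_add x (i + p.length) q.length u.length
    rw [hqf, show i + p.length + q.length = j by omega, hj'] at this
    rw [← this, Nat.add_comm q.length] at hu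
    exact hno _ (by omega) (by omega) (prefix_factorAt_iff.1 hu)

theorem successiveOccs_nextOcc {A : Type*} {x : ℕ → A} {u : List A} {i : ℕ}
    (hrec : UniformlyRecurrent x) (hi : OccursAt x u i) :
    SuccessiveOccs x u i (nextOcc x u i) := by
  have hne : {j | i < j ∧ OccursAt x u j}.Nonempty := by
    obtain ⟨N, hN⟩ := hrec u ⟨i, hi⟩
    obtain ⟨j, hj, -, ho⟩ := hN (i + 1)
    exact ⟨j, hj, ho⟩
  have hmem := Nat.sInf_mem hne
  exact ⟨hmem.1, hi, hmem.2, fun k hk hk' ho => Nat.notMem_of_lt_sInf hk' ⟨hk, ho⟩⟩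

theorem occursAt_occSeq {A : Type*} {x : ℕ → A} {u : List A} (hrec : UniformlyRecurrent x)
    (hpref : IsPrefixSeq x u) : ∀ n, OccursAt x u (occSeq x u n)
  | 0 => hpref
  | n + 1 => (successiveOccs_nextOcc hrec (occursAt_occSeq hrec hpref n)).2.2.1

theorem separated_retWord {A : Type*} {x : ℕ → A} {u : List A} (hrec : UniformlyRecurrent x)
    (hpref : IsPrefixSeq x u) (n : ℕ) : Separated u (retWord x u n) :=
  (successiveOccs_nextOcc hrec (occursAt_occSeq hrec hpref n)).separated

/-- `thetaLetter` is injective on the alphabet because the label of a return word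
is a function of that word. -/
theorem injOn_thetaLetter {A : Type*} (x : ℕ → A) (u : List A) :
    Set.InjOn (thetaLetter x u) (derivedAlphabet x u) := by
  intro a ha b hb hab
  have ha' : derivedSeq x u (sInf {n | derivedSeq x u n = a}) = a := Nat.sInf_mem ha
  have hb' : derivedSeq x u (sInf {n | derivedSeq x u n = b}) = b := Nat.sInf_mem hb
  unfold thetaLetter at hab
  rw [← ha', ← hb']
  unfold derivedSeq at hab ⊢
  rw [hab]

/-- For a uniformly recurrent sequence `x` and a nonempty prefix `u` of `x`,
the set of return words to `u` is a code: the morphism `Θ_{x,u} : R_{x,u}* → A*`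
is injective. -/
theorem return_words_are_a_code {A : Type*} (x : ℕ → A) (u : List A)
    (hrec : UniformlyRecurrent x) (hu : u ≠ []) (hpref : IsPrefixSeq x u) :
    ∀ l₁ l₂ : List ℕ,
      (∀ c ∈ l₁, c ∈ derivedAlphabet x u) →
      (∀ c ∈ l₂, c ∈ derivedAlphabet x u) →
      theta x u l₁ = theta x u l₂ → l₁ = l₂ := by
  intro l₁ l₂ h₁ h₂ h
  have hsep : ∀ l : List ℕ, ∀ r ∈ l.map (thetaLetter x u), Separated u r := by
    intro l r hr
    obtain ⟨c, -, rfl⟩ := List.mem_map.1 hr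
    exact separated_retWord hrec hpref _
  have hmap := flatten_injOn_separated (hsep l₁) (hsep l₂) h
  clear h
  induction l₁ generalizing l₂ with
  | nil => exact (List.map_eq_nil_iff.1 hmap.symm).symm
  | cons a l₁ ih =>
    cases l₂ with
    | nil => simp at hmap
    | cons b l₂ =>
      simp only [List.map_cons, List.cons.injEq] at hmap
      rw [injOn_thetaLetter x u (h₁ a (by simp)) (h₂ b (by simp)) hmap.1,
        ih l₂ (fun c hc => h₁ c (by simp [hc])) (fun c hc => h₂ c (by simp [hc])) hmap.2]

end Rauzy
end

section
/- Let x be a uniformly recurrent sequence over a finite alphabet A, and let u and v be nonempty prefixes of x such that u is a prefix of v. Then every return word to v is a concatenation of return words to u; that is, ℛ_{x,v} ⊆ Θ_{x,u}(R_{x,u}*). -/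
/-!
Since `u` is a prefix of `v`, every occurrence of `v` in `x` is an occurrence of `u`. By
recurrence, `occSeq x u` is strictly increasing and enumerates all occurrences of `u`
(`exists_occSeq_eq`), so two successive occurrences of `v` are at positions `occSeq x u m` and
`occSeq x u n` with `m < n`, and the word between them is `retWord x u m ⋯ retWord x u (n - 1)`.
Labelling by order of first appearance is injective on return words
(`retWord_eq_of_derivedSeq_eq`), so `thetaLetter` sends the label of each `retWord x u k` back to
that word, and the concatenation is the image under `theta` of the block of `derivedSeq x u` with
indices in `[m, n)` (`theta_derivedSeq_block`).
-/

namespace Rauzy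

variable {A B Γ : Type*}

theorem OccursAt.of_prefix {A : Type*} {x : ℕ → A} {u v : List A} {i : ℕ}
    (h : OccursAt x v i) (huv : u <+: v) : OccursAt x u i := by
  have hlen := huv.length_le
  have ht : u = v.take u.length := List.prefix_iff_eq_take.1 huv
  unfold OccursAt at *
  rw [← h, factorAt, ← List.map_take, List.take_range, min_eq_left hlen] at ht
  exact ht.symm

theorem factorAt_append {A : Type*} (x : ℕ → A) (i m n : ℕ) :
    factorAt x i m ++ factorAt x (i + m) n = factorAt x i (m + n) := by
  simp [factorAt, List.range_add, Function.comp_def, Nat.add_assoc]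

/-- Words with the same label are equal: if `w` first appears before `w'`, then the set of
words seen strictly before `w'` contains `w` together with all those seen strictly before `w`. -/
theorem retWord_eq_of_derivedSeq_eq {A : Type*} (x : ℕ → A) (u : List A) {m n : ℕ}
    (h : derivedSeq x u m = derivedSeq x u n) : retWord x u m = retWord x u n := by
  classical
  have hfirst : ∀ k, retWord x u (firstIdx x u (retWord x u k)) = retWord x u k := fun k =>
    Nat.sInf_mem (s := {n | retWord x u n = retWord x u k}) ⟨k, rfl⟩
  have hlt : ∀ a b, firstIdx x u (retWord x u a) < firstIdx x u (retWord x u b) →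
      derivedSeq x u a < derivedSeq x u b := by
    intro a b hab
    unfold derivedSeq
    refine Finset.card_lt_card ((Finset.ssubset_iff_of_subset ?_).2 ⟨retWord x u a, ?_, ?_⟩)
    · exact Finset.image_subset_image (Finset.range_subset_range.2 hab.le)
    · exact Finset.mem_image.2 ⟨_, Finset.mem_range.2 hab, hfirst a⟩
    · intro hmem
      obtain ⟨c, hc, hca⟩ := Finset.mem_image.1 hmem
      exact absurd (Finset.mem_range.1 hc)
        (not_lt.2 (Nat.sInf_le (s := {n | retWord x u n = retWord x u a}) hca))
  rcases lt_trichotomy (firstIdx x u (retWord x u m)) (firstIdx x u (retWord x u n))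
    with hc | hc | hc
  · exact absurd h (hlt _ _ hc).ne
  · rw [← hfirst m, hc, hfirst n]
  · exact absurd h (hlt _ _ hc).ne'

theorem thetaLetter_derivedSeq {A : Type*} (x : ℕ → A) (u : List A) (n : ℕ) :
    thetaLetter x u (derivedSeq x u n) = retWord x u n :=
  retWord_eq_of_derivedSeq_eq x u
    (Nat.sInf_mem (s := {k | derivedSeq x u k = derivedSeq x u n}) ⟨n, rfl⟩)

/-- Recurrence makes the set defining `nextOcc` nonempty, so its infimum is not a junk value. -/
theorem lt_nextOcc {A : Type*} {x : ℕ → A} {u : List A} (hrec : UniformlyRecurrent x)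
    (hpu : IsPrefixSeq x u) (i : ℕ) : i < nextOcc x u i := by
  obtain ⟨N, hN⟩ := hrec u ⟨0, hpu⟩
  obtain ⟨j, hij, -, hj⟩ := hN (i + 1)
  exact (Nat.sInf_mem (s := {j | i < j ∧ OccursAt x u j}) ⟨j, hij, hj⟩).1

theorem occSeq_strictMono {A : Type*} {x : ℕ → A} {u : List A} (hrec : UniformlyRecurrent x)
    (hpu : IsPrefixSeq x u) : StrictMono (occSeq x u) :=
  strictMono_nat_of_lt_succ fun n => lt_nextOcc hrec hpu (occSeq x u n)

/-- The sequence `occSeq` enumerates every occurrence of `u`. -/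
theorem exists_occSeq_eq {A : Type*} {x : ℕ → A} {u : List A} (hrec : UniformlyRecurrent x)
    (hpu : IsPrefixSeq x u) {p : ℕ} (hp : OccursAt x u p) : ∃ n, occSeq x u n = p := by
  have hmono := occSeq_strictMono hrec hpu
  have hbracket : ∀ q, ∃ n, occSeq x u n ≤ q ∧ q < occSeq x u (n + 1) := by
    intro q
    induction q with
    | zero => exact ⟨0, le_rfl, hmono (Nat.lt_succ_self 0)⟩
    | succ q ih =>
      obtain ⟨n, h1, h2⟩ := ih
      rcases Nat.lt_or_ge (q + 1) (occSeq x u (n + 1)) with h | h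
      · exact ⟨n, by omega, h⟩
      · exact ⟨n + 1, h, (Nat.succ_le_of_lt h2).trans_lt (hmono (Nat.lt_succ_self (n + 1)))⟩
  obtain ⟨n, h1, h2⟩ := hbracket p
  refine ⟨n, h1.eq_or_lt.resolve_right fun hlt => ?_⟩
  exact absurd h2 (not_lt.2 (Nat.sInf_le (s := {j | occSeq x u n < j ∧ OccursAt x u j}) ⟨hlt, hp⟩))

/-- The word read between two occurrences of `u` is the image under `Θ_{x,u}` of the
corresponding block of the derived sequence. -/
theorem theta_derivedSeq_block {A : Type*} {x : ℕ → A} {u : List A} (hrec : UniformlyRecurrent x)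
    (hpu : IsPrefixSeq x u) (m d : ℕ) :
    theta x u (factorAt (derivedSeq x u) m d) =
      factorAt x (occSeq x u m) (occSeq x u (m + d) - occSeq x u m) := by
  have hmono := occSeq_strictMono hrec hpu
  induction d with
  | zero => simp [theta, apply, factorAt]
  | succ d ih =>
    have h1 : occSeq x u m ≤ occSeq x u (m + d) := hmono.monotone (Nat.le_add_right m d)
    have h2 : occSeq x u (m + d) < occSeq x u (m + d + 1) := hmono (Nat.lt_succ_self _)
    have hsplit : theta x u (factorAt (derivedSeq x u) m (d + 1)) =
        theta x u (factorAt (derivedSeq x u) m d) ++ retWord x u (m + d) := by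
      rw [← thetaLetter_derivedSeq]
      simp [theta, apply, factorAt, List.range_succ]
    have happ := factorAt_append x (occSeq x u m) (occSeq x u (m + d) - occSeq x u m)
      (occSeq x u (m + d + 1) - occSeq x u (m + d))
    rw [Nat.add_sub_cancel' h1] at happ
    rw [hsplit, ih, retWord, happ, ← Nat.add_assoc]
    congr 1
    omega

/-- If `u` and `v` are nonempty prefixes of a uniformly recurrent
sequence `x` with `u` a prefix of `v`, then every return word to `v` is a
concatenation of return words to `u`: `ℛ_{x,v} ⊆ Θ_{x,u}(R_{x,u}*)`. -/
theorem return_words_to_longer_prefix_concat {A : Type*} (x : ℕ → A) (u v : List A)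
    (hrec : UniformlyRecurrent x) (hu : u ≠ []) (hv : v ≠ [])
    (hpu : IsPrefixSeq x u) (hpv : IsPrefixSeq x v) (huv : u <+: v) :
    ∀ w ∈ returnWords x v,
      ∃ l : List ℕ, (∀ c ∈ l, c ∈ derivedAlphabet x u) ∧ theta x u l = w := by
  rintro w ⟨i, j, ⟨hij, hi, hj, -⟩, rfl⟩
  obtain ⟨m, rfl⟩ := exists_occSeq_eq hrec hpu (hi.of_prefix huv)
  obtain ⟨n, rfl⟩ := exists_occSeq_eq hrec hpu (hj.of_prefix huv)
  obtain ⟨d, rfl⟩ := Nat.exists_eq_add_of_lt ((occSeq_strictMono hrec hpu).lt_iff_lt.1 hij)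
  refine ⟨factorAt (derivedSeq x u) m (d + 1), ?_, theta_derivedSeq_block hrec hpu m (d + 1)⟩
  intro c hc
  obtain ⟨k, -, rfl⟩ := List.mem_map.1 hc
  exact ⟨m + k, rfl⟩

end Rauzy
end

section
/- Let σ be a primitive substitution on an alphabet with d letters and let x ∈ A^ℕ be a fixed point of σ. Then for every factor w of x of length 2, the difference between any two successive occurrences of w in x is at most 2|σ|^{(d−1)d^d}. In particular R_σ, the maximal difference between two successive occurrences of a word of length 2 in any fixed point of σ, satisfies R_σ ≤ 2|σ|^{(d−1)d^d}. -/
/-!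
The action of `σ` on words is iterated as `(apply σ)^[n]`. Two facts give the bound.

If a word of length 2 occurs in `σ^N(c)` for *every* letter `c`, then it occurs in each block of
the decomposition `x = σ^N(x₀) σ^N(x₁) ⋯`, whose blocks have length at most `|σ|^N`; a gap spans at
most two blocks, hence is at most `2|σ|^N` (`gap_of_everywhere`). So it suffices to find such an
`N ≤ (d-1)d^d` for each factor of length 2.

A factor of length 2 lies either inside some `σ(c)`, or across the boundary of `σ(c)σ(e)` for a
factor `ce` occurring further to the left. Descending, every factor is `B^m(p)` where `p` occurs in
some `σ(c)` and `B(c,e) = (last letter of σ(c), first letter of σ(e))` (`factor_origin`); by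
pigeonhole on the `d²` pairs one may take `m < d²`. Then the factor occurs in `σ^{m+1}(c)`. Finally
the first letter `x₀` satisfies `x₀ ∈ σ(x₀)`, so paths of length at most `d-1` into and out of `x₀`
can be padded by this loop, and `c` occurs in `σ^n(e)` for all `e` and all `n ≥ 2(d-1)`
(`mem_of_large`). The exponent `d² + 2(d-1)` is at most `(d-1)d^d` when `d ≥ 3`.

For `d = 2` the exponent allowed is `4`. There `m ≤ 2`, and `m ≤ 1` is fine; if `m = 2` cannot be
lowered, then `p` ends with the letter `b ≠ x₀` and `σ(b)` starts with `x₀`, which forces the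
letter `c` to occur in both `σ(x₀)` and `σ(b)`, so that the exponent `2 + 1 + 1` works.
-/

namespace Rauzy

variable {A B Γ : Type*}

/-! ### Iterates of a substitution on words -/

section Words

lemma apply_append (σ : A → List A) (u v : List A) :
    apply σ (u ++ v) = apply σ u ++ apply σ v := by
  simp [apply]

@[simp] lemma apply_singleton (σ : A → List A) (a : A) : apply σ [a] = σ a := by
  simp [apply]

@[simp] lemma apply_nil (σ : A → List A) : apply σ [] = [] := by
  simp [apply]

lemma iter_append (σ : A → List A) (n : ℕ) (u v : List A) :
    (apply σ)^[n] (u ++ v) = (apply σ)^[n] u ++ (apply σ)^[n] v := by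
  induction n generalizing u v with
  | zero => rfl
  | succ n ih => simp only [Function.iterate_succ_apply, apply_append, ih]

lemma iter_infix (σ : A → List A) (n : ℕ) {u v : List A} (h : u <:+: v) :
    (apply σ)^[n] u <:+: (apply σ)^[n] v := by
  obtain ⟨s, t, rfl⟩ := h
  exact ⟨(apply σ)^[n] s, (apply σ)^[n] t, by simp only [iter_append]⟩

lemma singleton_infix {a : A} {l : List A} (h : a ∈ l) : [a] <:+: l := by
  obtain ⟨s, t, rfl⟩ := List.append_of_mem h
  exact ⟨s, t, by simp⟩

/-- Occurrence in iterates composes: a word in `σ^m(c)` with `c` in `σ^n(e)` is in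
`σ^{m+n}(e)`. -/
lemma infix_trans (σ : A → List A) {w : List A} {c e : A} {m n : ℕ}
    (h1 : w <:+: (apply σ)^[m] [c]) (h2 : c ∈ (apply σ)^[n] [e]) :
    w <:+: (apply σ)^[m + n] [e] := by
  rw [Function.iterate_add_apply]
  exact h1.trans (iter_infix σ m (singleton_infix h2))

lemma mem_trans (σ : A → List A) {a c e : A} {m n : ℕ}
    (h1 : a ∈ (apply σ)^[m] [c]) (h2 : c ∈ (apply σ)^[n] [e]) :
    a ∈ (apply σ)^[m + n] [e] :=
  (infix_trans σ (singleton_infix h1) h2).subset (by simp)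

lemma mem_iter_self {σ : A → List A} {a : A} (ha : a ∈ σ a) (n : ℕ) :
    a ∈ (apply σ)^[n] [a] := by
  induction n with
  | zero => simp
  | succ n ih => exact mem_trans σ ih (n := 1) (by simpa using ha)

lemma length_le_mSize [Fintype A] (σ : A → List A) (a : A) : (σ a).length ≤ mSize σ :=
  Finset.le_sup (f := fun a => (σ a).length) (Finset.mem_univ a)

lemma length_apply_le [Fintype A] (σ : A → List A) (l : List A) :
    (apply σ l).length ≤ mSize σ * l.length := by
  induction l with
  | nil => simp
  | cons a l ih =>
    have h : apply σ (a :: l) = σ a ++ apply σ l := by simp [apply]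
    have := length_le_mSize σ a
    rw [h, List.length_append, List.length_cons, Nat.mul_succ]
    omega

lemma length_iter_le [Fintype A] (σ : A → List A) (n : ℕ) (l : List A) :
    ((apply σ)^[n] l).length ≤ mSize σ ^ n * l.length := by
  induction n with
  | zero => simp
  | succ n ih =>
    rw [Function.iterate_succ_apply', pow_succ', mul_assoc]
    exact (length_apply_le σ _).trans (Nat.mul_le_mul_left _ ih)

end Words

/-! ### Letters in iterates of a primitive substitution -/

section Letters

variable [Fintype A] [DecidableEq A]

lemma count_apply (σ : A → List A) (i : A) (l : List A) :
    (apply σ l).count i = ∑ c, incMatrix σ i c * l.count c := by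
  induction l with
  | nil => simp
  | cons a l ih =>
    have h : apply σ (a :: l) = σ a ++ apply σ l := by simp [apply]
    rw [h, List.count_append, ih]
    simp only [List.count_cons, mul_add, Finset.sum_add_distrib]
    rw [add_comm]
    congr 1
    simp [incMatrix, Finset.sum_ite_eq]

lemma count_iter (σ : A → List A) (n : ℕ) (i j : A) :
    ((apply σ)^[n] [j]).count i = (incMatrix σ ^ n) i j := by
  induction n generalizing i with
  | zero =>
    by_cases h : i = j
    · simp [h]
    · simp [Matrix.one_apply_ne h, List.count_eq_zero, h]
  | succ n ih =>
    rw [Function.iterate_succ_apply', count_apply, pow_succ', Matrix.mul_apply]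
    simp only [ih]

lemma Primitive.exists_mem {σ : A → List A} (h : Primitive σ) :
    ∃ k, 0 < k ∧ ∀ c e, e ∈ (apply σ)^[k] [c] := by
  obtain ⟨k, hk, hpos⟩ := h
  refine ⟨k, hk, fun c e => ?_⟩
  rw [← List.count_pos_iff, count_iter]
  exact hpos e c

lemma Primitive.ne_nil {σ : A → List A} (h : Primitive σ) (c : A) : σ c ≠ [] := by
  intro h0
  obtain ⟨k, hk, hmem⟩ := h.exists_mem
  obtain ⟨k, rfl⟩ := Nat.exists_eq_succ_of_ne_zero hk.ne'
  have := hmem c c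
  rw [Function.iterate_succ_apply, apply_singleton, h0,
    Function.iterate_fixed (apply_nil σ)] at this
  simp at this

/-- A shortest path from `c` to `e` in the graph of `σ` visits letters at every smaller distance,
so it has fewer than `d` edges. -/
lemma Primitive.exists_mem_lt {σ : A → List A} (h : Primitive σ) (c e : A) :
    ∃ n < Fintype.card A, e ∈ (apply σ)^[n] [c] := by
  classical
  obtain ⟨k, -, hmem⟩ := h.exists_mem
  have hex : ∀ v, ∃ n, v ∈ (apply σ)^[n] [c] := fun v => ⟨k, hmem c v⟩
  let D : A → ℕ := fun v => Nat.find (hex v)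
  have hD : ∀ v, v ∈ (apply σ)^[D v] [c] := fun v => Nat.find_spec (hex v)
  have hmin : ∀ v n, v ∈ (apply σ)^[n] [c] → D v ≤ n := fun v n hn => Nat.find_min' (hex v) hn
  have hpred : ∀ v n, D v = n + 1 → ∃ u, D u = n := by
    intro v n hv
    have h1 := hD v
    rw [hv, Function.iterate_succ_apply'] at h1
    simp only [apply, List.mem_flatten, List.mem_map] at h1
    obtain ⟨_, ⟨u, hu, rfl⟩, hvu⟩ := h1
    refine ⟨u, le_antisymm (hmin u n hu) ?_⟩
    have h2 : v ∈ (apply σ)^[1 + D u] [c] := mem_trans σ (by simpa using hvu) (hD u)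
    have := hmin v _ h2
    omega
  have hall : ∀ n v, D v = n → ∀ i ≤ n, ∃ u, D u = i := by
    intro n
    induction n with
    | zero => intro v hv i hi; exact ⟨v, by omega⟩
    | succ n ih =>
      intro v hv i hi
      obtain ⟨u, hu⟩ := hpred v n hv
      rcases Nat.lt_or_ge n i with h | h
      · exact ⟨v, by omega⟩
      · exact ih u hu i h
  refine ⟨D e, ?_, hD e⟩
  have hsub : Finset.range (D e + 1) ⊆ Finset.univ.image D := by
    intro i hi
    obtain ⟨u, hu⟩ := hall _ e rfl i (by simpa [Nat.lt_succ_iff] using hi)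
    exact Finset.mem_image.2 ⟨u, Finset.mem_univ _, hu⟩
  have h1 := (Finset.card_le_card hsub).trans Finset.card_image_le
  simpa [Nat.succ_le_iff] using h1

/-- A loop at `a` allows the paths `e → a → c` to be padded to any prescribed large length. -/
lemma mem_of_large {σ : A → List A} (h : Primitive σ) {a : A} (ha : a ∈ σ a) (c e : A) {n : ℕ}
    (hn : 2 * (Fintype.card A - 1) ≤ n) : c ∈ (apply σ)^[n] [e] := by
  obtain ⟨p, hp, h1⟩ := h.exists_mem_lt e a
  obtain ⟨q, hq, h2⟩ := h.exists_mem_lt a c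
  have h3 := mem_trans σ (mem_trans σ h2 (mem_iter_self ha (n - p - q))) h1
  rwa [show q + (n - p - q) + p = n by omega] at h3

end Letters

/-! ### Block decompositions of a fixed point -/

section Blocks

lemma factorAt_length (x : ℕ → A) (i n : ℕ) : (factorAt x i n).length = n := by
  simp [factorAt]

lemma factorAt_succ (x : ℕ → A) (n : ℕ) : factorAt x 0 (n + 1) = factorAt x 0 n ++ [x n] := by
  simp [factorAt, List.range_succ]

lemma factorAt_two (x : ℕ → A) (i : ℕ) : factorAt x i 2 = [x i, x (i + 1)] := by
  simp [factorAt, List.range_succ]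

lemma iter_fixed {σ : A → List A} {x : ℕ → A} (hx : SeqImage σ x x) (N n : ℕ) :
    (apply σ)^[N] (factorAt x 0 n) =
      factorAt x 0 ((apply σ)^[N] (factorAt x 0 n)).length := by
  induction N generalizing n with
  | zero => simp [factorAt_length]
  | succ N ih =>
    rw [Function.iterate_succ_apply]
    have h : factorAt x 0 (apply σ (factorAt x 0 n)).length = apply σ (factorAt x 0 n) := hx n
    rw [← h]
    exact ih _

/-- The position in `x` at which the block `σ^N(xₙ)` starts. -/
def blockStart (σ : A → List A) (x : ℕ → A) (N n : ℕ) : ℕ :=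
  ((apply σ)^[N] (factorAt x 0 n)).length

lemma blockStart_zero (σ : A → List A) (x : ℕ → A) (N : ℕ) : blockStart σ x N 0 = 0 := by
  simp [blockStart, factorAt, Function.iterate_fixed (apply_nil σ)]

lemma blockStart_succ (σ : A → List A) (x : ℕ → A) (N n : ℕ) :
    blockStart σ x N (n + 1) = blockStart σ x N n + ((apply σ)^[N] [x n]).length := by
  simp [blockStart, factorAt_succ, iter_append]

lemma block_getElem {σ : A → List A} {x : ℕ → A} (hx : SeqImage σ x x) (N n k : ℕ)
    (hk : k < ((apply σ)^[N] [x n]).length) :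
    x (blockStart σ x N n + k) = ((apply σ)^[N] [x n])[k] := by
  have h1 : factorAt x 0 (blockStart σ x N (n + 1)) =
      (apply σ)^[N] (factorAt x 0 n) ++ (apply σ)^[N] [x n] := by
    rw [← iter_append, ← factorAt_succ]
    exact (iter_fixed hx N (n + 1)).symm
  have h2 := congrArg (fun l => l[blockStart σ x N n + k]?) h1
  have hlt : blockStart σ x N n + k < blockStart σ x N (n + 1) := by
    rw [blockStart_succ]; omega
  simp only [factorAt, List.getElem?_map, List.getElem?_range hlt, Option.map_some,
    zero_add] at h2
  rw [List.getElem?_append_right (by simp [blockStart, factorAt])] at h2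
  have h3 : blockStart σ x N n + k -
      ((apply σ)^[N] (List.map (fun k => x (0 + k)) (List.range n))).length = k := by
    simp [blockStart, factorAt]
  simp only [zero_add] at h3
  rw [h3, List.getElem?_eq_getElem hk] at h2
  exact Option.some.inj h2

lemma infix_pair_getElem {a b : A} {l : List A} (h : [a, b] <:+: l) :
    ∃ k, ∃ hk : k + 1 < l.length, l[k] = a ∧ l[k + 1] = b := by
  obtain ⟨s, t, rfl⟩ := h
  refine ⟨s.length, by simp, ?_, ?_⟩
  · simp
  · simp

lemma infix_pair_of_getElem {l : List A} {k : ℕ} (hk : k + 1 < l.length) :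
    [l[k], l[k + 1]] <:+: l := by
  refine ⟨l.take k, l.drop (k + 2), ?_⟩
  conv_rhs => rw [← List.take_append_drop k l, List.drop_eq_getElem_cons (by omega : k < l.length),
    List.drop_eq_getElem_cons hk]
  simp

lemma exists_between {g : ℕ → ℕ} (h0 : g 0 = 0) (hg : ∀ n, g n < g (n + 1)) (i : ℕ) :
    ∃ n, g n ≤ i ∧ i < g (n + 1) := by
  induction i with
  | zero => exact ⟨0, by omega, by have := hg 0; omega⟩
  | succ i ih =>
    obtain ⟨n, h1, h2⟩ := ih
    rcases Nat.lt_or_ge (i + 1) (g (n + 1)) with h | h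
    · exact ⟨n, by omega, h⟩
    · exact ⟨n + 1, h, by have := hg (n + 1); omega⟩

/-- A pair occurring in every block `σ^N(c)` has gaps spanning at most two blocks. -/
lemma gap_of_everywhere [Fintype A] {σ : A → List A} {x : ℕ → A} (hx : SeqImage σ x x)
    {a b : A} {N : ℕ} (hN : ∀ c, [a, b] <:+: (apply σ)^[N] [c]) {i j : ℕ}
    (hij : SuccessiveOccs x [a, b] i j) : j - i ≤ 2 * mSize σ ^ N := by
  have hlen : ∀ c, 0 < ((apply σ)^[N] [c]).length := fun c => by
    have := (hN c).length_le
    simp only [List.length_cons, List.length_nil] at this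
    omega
  have hle : ∀ c, ((apply σ)^[N] [c]).length ≤ mSize σ ^ N := fun c => by
    simpa using length_iter_le σ N [c]
  obtain ⟨n, h1, h2⟩ := exists_between (g := blockStart σ x N) (blockStart_zero σ x N)
    (fun n => by rw [blockStart_succ]; have := hlen (x n); omega) i
  obtain ⟨k, hk, ha, hb⟩ := infix_pair_getElem (hN (x (n + 1)))
  have hocc : OccursAt x [a, b] (blockStart σ x N (n + 1) + k) := by
    change factorAt x _ 2 = _
    rw [factorAt_two, add_assoc, block_getElem hx N (n + 1) k (by omega),
      block_getElem hx N (n + 1) (k + 1) hk, ha, hb]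
  have hj : j ≤ blockStart σ x N (n + 1) + k := by
    by_contra! hlt
    exact hij.2.2.2 _ (by omega) hlt hocc
  have h3 := blockStart_succ σ x N n
  have h4 := hle (x n)
  have h5 := hle (x (n + 1))
  omega

/-! ### Origin of the factors of length 2 -/

/-- The first letter of `σ(c)` (`c` itself if `σ(c)` is empty). -/
def firstL (σ : A → List A) (c : A) : A := (σ c).headD c

/-- The last letter of `σ(c)` (`c` itself if `σ(c)` is empty). -/
def lastL (σ : A → List A) (c : A) : A := (σ c).getLastD c

/-- The pair of letters of `σ(c)σ(e)` straddling the boundary between `σ(c)` and `σ(e)`. -/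
def bdry (σ : A → List A) (p : A × A) : A × A := (lastL σ p.1, firstL σ p.2)

lemma firstL_eq {σ : A → List A} {c : A} (h : 0 < (σ c).length) : firstL σ c = (σ c)[0] := by
  rw [firstL, List.headD_eq_head?_getD, List.head?_eq_getElem?, List.getElem?_eq_getElem h]
  rfl

lemma lastL_eq {σ : A → List A} {c : A} (h : 0 < (σ c).length) :
    lastL σ c = (σ c)[(σ c).length - 1] := by
  unfold lastL
  rw [List.getLastD_eq_getLast?, List.getLast?_eq_getElem?, List.getElem?_eq_getElem (by omega)]
  rfl

lemma firstL_mem {σ : A → List A} {c : A} (h : σ c ≠ []) : firstL σ c ∈ σ c := by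
  rw [firstL_eq (List.length_pos_of_ne_nil h)]
  exact List.getElem_mem _

lemma bdry_infix {σ : A → List A} (hne : ∀ c, σ c ≠ []) {p : A × A} {l : List A}
    (h : [p.1, p.2] <:+: l) : [(bdry σ p).1, (bdry σ p).2] <:+: apply σ l := by
  have h1 : apply σ [p.1, p.2] <:+: apply σ l := iter_infix σ 1 h
  refine List.IsInfix.trans ?_ h1
  refine ⟨(σ p.1).dropLast, (σ p.2).tail, ?_⟩
  have h2 : (σ p.1).dropLast ++ [lastL σ p.1] = σ p.1 := by
    have : lastL σ p.1 = (σ p.1).getLast (hne _) := by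
      rw [lastL, List.getLastD_eq_getLast?, List.getLast?_eq_getLast_of_ne_nil (hne _)]; rfl
    rw [this, List.dropLast_append_getLast]
  have h3 : firstL σ p.2 :: (σ p.2).tail = σ p.2 := by
    unfold firstL
    cases hs : σ p.2 with
    | nil => exact absurd hs (hne _)
    | cons a l => simp
  calc _ = ((σ p.1).dropLast ++ [lastL σ p.1]) ++ (firstL σ p.2 :: (σ p.2).tail) := by
        simp [bdry]
    _ = _ := by rw [h2, h3]; simp [apply]

lemma bdry_iter_infix {σ : A → List A} (hne : ∀ c, σ c ≠ []) {p : A × A} {c : A}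
    (h : [p.1, p.2] <:+: σ c) (m : ℕ) :
    [((bdry σ)^[m] p).1, ((bdry σ)^[m] p).2] <:+: (apply σ)^[m + 1] [c] := by
  induction m with
  | zero => simpa using h
  | succ m ih =>
    rw [Function.iterate_succ_apply', Function.iterate_succ_apply']
    exact bdry_infix hne ih

/-- Every factor of length 2 of a fixed point is an iterated boundary pair of a pair lying inside
the image of a letter. -/
lemma factor_origin {σ : A → List A} (hne : ∀ c, σ c ≠ []) {x : ℕ → A} (hx : SeqImage σ x x)
    (h2 : 2 ≤ (σ (x 0)).length) (i : ℕ) :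
    ∃ c p m, [Prod.fst p, Prod.snd p] <:+: σ c ∧ (bdry σ)^[m] p = (x i, x (i + 1)) := by
  induction i using Nat.strong_induction_on with
  | _ i ih =>
  have hpos : ∀ c, 0 < (σ c).length := fun c => List.length_pos_of_ne_nil (hne c)
  have hs : ∀ n, blockStart σ x 1 (n + 1) = blockStart σ x 1 n + (σ (x n)).length := fun n => by
    simpa using blockStart_succ σ x 1 n
  have hget : ∀ n k (hk : k < (σ (x n)).length), x (blockStart σ x 1 n + k) = (σ (x n))[k] := by
    intro n k hk
    have := block_getElem hx 1 n k (by simpa using hk)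
    simpa using this
  obtain ⟨n, h3, h4⟩ := exists_between (g := blockStart σ x 1) (blockStart_zero σ x 1)
    (fun n => by rw [hs]; have := hpos (x n); omega) i
  obtain ⟨k, rfl⟩ := Nat.exists_eq_add_of_le h3
  have h5 := hs n
  rcases Nat.lt_or_ge (k + 1) (σ (x n)).length with hk | hk
  · refine ⟨x n, (x (blockStart σ x 1 n + k), x (blockStart σ x 1 n + k + 1)), 0, ?_, rfl⟩
    rw [add_assoc]
    simp only
    rw [hget n k (by omega), hget n (k + 1) hk]
    exact infix_pair_of_getElem hk
  · -- The pair straddles two blocks; since `|σ(x₀)| ≥ 2`, its preimage lies strictly to the left.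
    have hlt : ∀ n, n + 2 ≤ blockStart σ x 1 (n + 1) := by
      intro n
      induction n with
      | zero => rw [hs]; omega
      | succ n ihn => rw [hs]; have := hpos (x (n + 1)); omega
    have h6 := hlt n
    obtain ⟨c, p, m, hc, hm⟩ := ih n (by omega)
    refine ⟨c, p, m + 1, hc, ?_⟩
    rw [Function.iterate_succ_apply', hm]
    have hk' : k = (σ (x n)).length - 1 := by omega
    have e1 : x (blockStart σ x 1 n + k) = lastL σ (x n) := by
      rw [hget n k (by omega), lastL_eq (hpos _)]
      simp only [hk']
    have e2 : x (blockStart σ x 1 n + k + 1) = firstL σ (x (n + 1)) := by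
      rw [firstL_eq (hpos _), ← hget (n + 1) 0 (hpos _)]
      congr 1
      omega
    rw [e1, e2, bdry]

end Blocks

/-! ### Occurrence of a pair in all iterates -/

/-- Iterates of a self-map of a finite type are all attained at times below the cardinality. -/
lemma exists_iterate_lt_card {α : Type*} [Fintype α] (f : α → α) (a : α) (m : ℕ) :
    ∃ k < Fintype.card α, f^[k] a = f^[m] a := by
  induction m using Nat.strong_induction_on with
  | _ m ih =>
  rcases Nat.lt_or_ge m (Fintype.card α) with h | h
  · exact ⟨m, h, rfl⟩
  · obtain ⟨s, t, hst, he⟩ := Fintype.exists_ne_map_eq_of_card_lt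
      (fun i : Fin (m + 1) => f^[(i : ℕ)] a) (by simp; omega)
    have key : ∀ s t : ℕ, s < t → t ≤ m → f^[s] a = f^[t] a →
        ∃ k < Fintype.card α, f^[k] a = f^[m] a := by
      intro s t hlt htm hest
      obtain ⟨k, hk, hk'⟩ := ih (m - t + s) (by omega)
      refine ⟨k, hk, hk'.trans ?_⟩
      rw [Function.iterate_add_apply, hest, ← Function.iterate_add_apply, Nat.sub_add_cancel htm]
    rcases lt_or_gt_of_ne (fun h => hst (Fin.ext h) : (s : ℕ) ≠ t) with hlt | hlt
    · exact key s t hlt (by omega) he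
    · exact key t s hlt (by omega) he.symm

section Main

variable [Fintype A] [DecidableEq A]

lemma exponent_le {d m : ℕ} (hd : 3 ≤ d) (hm : m < d * d) :
    m + 1 + 2 * (d - 1) ≤ (d - 1) * d ^ d := by
  have h1 : d ^ 3 ≤ d ^ d := Nat.pow_le_pow_right (by omega) hd
  obtain ⟨e, rfl⟩ : ∃ e, d = e + 3 := ⟨d - 3, by omega⟩
  have h2 : (e + 3 - 1) * (e + 3) ^ 3 ≤ (e + 3 - 1) * (e + 3) ^ (e + 3) :=
    Nat.mul_le_mul_left _ h1
  refine le_trans ?_ h2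
  rw [show e + 3 - 1 = e + 2 by omega]
  nlinarith [Nat.zero_le e, Nat.zero_le (e ^ 2), Nat.zero_le (e ^ 3), Nat.zero_le (e ^ 4)]

/-- Over two letters, the exponent `4` suffices. -/
lemma everywhere_two {σ : A → List A} (hprim : Primitive σ) {a : A} (ha : firstL σ a = a)
    (hd : Fintype.card A = 2) {c : A} {p : A × A} (hp : [p.1, p.2] <:+: σ c) (m : ℕ) :
    ∃ N ≤ 4, ∀ e, [((bdry σ)^[m] p).1, ((bdry σ)^[m] p).2] <:+: (apply σ)^[N] [e] := by
  have hne := hprim.ne_nil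
  have hmem : a ∈ σ a := by
    have := firstL_mem (hne a)
    rwa [ha] at this
  have h3 : ∀ x y z : A, x = y ∨ y = z ∨ x = z := by
    intro x y z
    by_contra! h
    have := Finset.card_le_univ ({x, y, z} : Finset A)
    rw [Finset.card_eq_three.2 ⟨x, y, z, h.1, h.2.2, h.2.1, rfl⟩] at this
    omega
  have hff : ∀ (f : A → A) y, f (f y) = y ∨ f (f y) = f y := by
    intro f y
    rcases h3 y (f y) (f (f y)) with h | h | h
    · left; rw [← h, ← h]
    · right; exact h.symm
    · left; exact h.symm
  induction m using Nat.strong_induction_on with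
  | _ m ih =>
  rcases Nat.lt_or_ge m 2 with h | h
  · refine ⟨m + 1 + 2, by omega, fun e => ?_⟩
    exact infix_trans σ (bdry_iter_infix hne hp m) (mem_of_large hprim hmem c e (by omega))
  rcases Nat.lt_or_ge 2 m with hm | hm
  · -- Self-maps `f` of a two-element set satisfy `f ∘ f ∘ f = f`, so `m` drops by two.
    have hfff : ∀ (f : A → A) y, f (f (f y)) = f y := by
      intro f y
      rcases hff f y with h | h
      · rw [h]
      · rw [h, h]
    obtain ⟨k, rfl⟩ : ∃ k, m = k + 3 := ⟨m - 3, by omega⟩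
    have e : (bdry σ)^[k + 3] p = (bdry σ)^[k + 1] p := by
      rw [Function.iterate_add_apply, Function.iterate_add_apply _ k 1]
      congr 1
      simp [bdry, hfff]
    rw [e]
    exact ih (k + 1) (by omega)
  obtain rfl : m = 2 := by omega
  by_cases hshort : firstL σ (firstL σ p.2) = p.2 ∧ firstL σ p.2 = p.2
  · -- The second coordinate is constant along the orbit, so the first one decides.
    rcases hff (lastL σ) p.1 with h1 | h1
    · have e : (bdry σ)^[2] p = (bdry σ)^[0] p := by
        simp [bdry, h1, hshort.1]
      rw [e]
      exact ih 0 (by omega)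
    · have e : (bdry σ)^[2] p = (bdry σ)^[1] p := by
        simp [bdry, h1, hshort.2]
      rw [e]
      exact ih 1 (by omega)
  · have hb : p.2 ≠ a := by
      intro hpa
      exact hshort (by rw [hpa, ha, ha]; exact ⟨rfl, rfl⟩)
    have hFb : firstL σ p.2 = a := by
      rcases h3 (firstL σ p.2) a p.2 with h1 | h1 | h1
      · exact h1
      · exact absurd h1.symm hb
      · exact absurd (by rw [h1, h1]; exact ⟨rfl, rfl⟩) hshort
    have hall : ∀ e, e = a ∨ e = p.2 := by
      intro e
      rcases h3 e a p.2 with h1 | h1 | h1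
      · exact Or.inl h1
      · exact absurd h1.symm hb
      · exact Or.inr h1
    have hba : p.2 ∈ σ a := by
      obtain ⟨n, hn, h1⟩ := hprim.exists_mem_lt a p.2
      rw [hd] at hn
      interval_cases n
      · exact absurd (by simpa using h1) hb
      · simpa using h1
    have hce : ∀ e, c ∈ σ e := by
      intro e
      rcases hall c with rfl | hc
      · rcases hall e with rfl | rfl
        · exact hmem
        · have := firstL_mem (hne p.2)
          rwa [hFb] at this
      · rcases hall e with rfl | rfl
        · rwa [hc]
        · rw [hc] at hp ⊢
          exact hp.subset (by simp)
    refine ⟨2 + 1 + 1, le_rfl, fun e => ?_⟩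
    exact infix_trans σ (bdry_iter_infix hne hp 2) (by simpa using hce e)

lemma pair_everywhere {σ : A → List A} (hprim : Primitive σ) (hd : 2 ≤ Fintype.card A)
    {x : ℕ → A} (hx : SeqImage σ x x) (i : ℕ) :
    ∃ N ≤ (Fintype.card A - 1) * Fintype.card A ^ Fintype.card A,
      ∀ e, [x i, x (i + 1)] <:+: (apply σ)^[N] [e] := by
  have hne := hprim.ne_nil
  have hpos : 0 < (σ (x 0)).length := List.length_pos_of_ne_nil (hne _)
  have hfirst : firstL σ (x 0) = x 0 := by
    rw [firstL_eq hpos]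
    have h1 := block_getElem hx 1 0 0 (by simpa using hpos)
    rw [blockStart_zero] at h1
    simpa using h1.symm
  have hmem : x 0 ∈ σ (x 0) := by
    have := firstL_mem (hne (x 0))
    rwa [hfirst] at this
  have h2 : 2 ≤ (σ (x 0)).length := by
    by_contra! hlt
    -- Otherwise `σ(x₀) = x₀`, and no other letter occurs in the iterates.
    obtain ⟨b, hb⟩ := List.length_eq_one_iff.1 (by omega : (σ (x 0)).length = 1)
    have hb' : apply σ [x 0] = [x 0] := by
      rw [apply_singleton, hb]
      rw [hb] at hmem
      rw [List.mem_singleton.1 hmem]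
    obtain ⟨e, he⟩ := Fintype.exists_ne_of_one_lt_card (by omega) (x 0)
    obtain ⟨n, -, hn⟩ := hprim.exists_mem_lt (x 0) e
    rw [Function.iterate_fixed hb'] at hn
    exact he (List.mem_singleton.1 hn)
  obtain ⟨c, p, m, hc, hm⟩ := factor_origin hne hx h2 i
  rcases hd.eq_or_lt with hd2 | hd3
  · obtain ⟨N, hN, hall⟩ := everywhere_two hprim hfirst hd2.symm hc m
    rw [hm] at hall
    exact ⟨N, by rw [← hd2]; omega, hall⟩
  · obtain ⟨k, hk, hkm⟩ := exists_iterate_lt_card (bdry σ) p m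
    rw [Fintype.card_prod] at hk
    refine ⟨k + 1 + 2 * (Fintype.card A - 1), exponent_le hd3 hk, fun e => ?_⟩
    have h3 := bdry_iter_infix hne hc k
    rw [hkm, hm] at h3
    exact infix_trans σ h3 (mem_of_large hprim hmem c e le_rfl)

lemma gap_bound {σ : A → List A} (hprim : Primitive σ) {x : ℕ → A} (hx : SeqImage σ x x)
    {w : List A} (hw : w.length = 2) {i j : ℕ} (hij : SuccessiveOccs x w i j) :
    j - i ≤ 2 * mSize σ ^ ((Fintype.card A - 1) * Fintype.card A ^ Fintype.card A) := by
  have hsize : 1 ≤ mSize σ :=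
    (List.length_pos_of_ne_nil (hprim.ne_nil (x 0))).trans_le (length_le_mSize σ (x 0))
  rcases Nat.lt_or_ge (Fintype.card A) 2 with hd | hd
  · -- Over at most one letter every position is an occurrence.
    have : Subsingleton A := Fintype.card_le_one_iff_subsingleton.1 (by omega)
    have hocc : OccursAt x w (i + 1) :=
      List.ext_getElem (factorAt_length _ _ _) fun _ _ _ => Subsingleton.elim _ _
    have hj : j ≤ i + 1 := by
      by_contra! hlt
      exact hij.2.2.2 _ (by omega) hlt hocc
    have := Nat.one_le_pow ((Fintype.card A - 1) * Fintype.card A ^ Fintype.card A) _ hsize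
    omega
  · obtain ⟨N, hN, hall⟩ := pair_everywhere hprim hd hx i
    have hwi : w = [x i, x (i + 1)] := by
      have := hij.2.1
      rw [OccursAt, hw, factorAt_two] at this
      exact this.symm
    rw [hwi] at hij
    exact (gap_of_everywhere hx hall hij).trans
      (Nat.mul_le_mul_left _ (Nat.pow_le_pow_right hsize hN))

end Main

/-- For a primitive substitution `σ` on a `d`-letter alphabet, in any
fixed point `x` of `σ` the difference between two successive occurrences of any
factor of length 2 is at most `2|σ|^((d−1)d^d)`; in particular
`R_σ ≤ 2|σ|^((d−1)d^d)`. -/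
theorem two_block_gap_bound {A : Type*} [Fintype A] [DecidableEq A]
    (σ : A → List A) (hprim : Primitive σ) :
    (∀ x : ℕ → A, SeqImage σ x x →
      ∀ w : List A, w.length = 2 → ∀ i j, SuccessiveOccs x w i j →
        j - i ≤ 2 * mSize σ ^ ((Fintype.card A - 1) * Fintype.card A ^ Fintype.card A)) ∧
    Rconst σ ≤ 2 * mSize σ ^ ((Fintype.card A - 1) * Fintype.card A ^ Fintype.card A) := by
  refine ⟨fun x hx w hw i j hij => gap_bound hprim hx hw hij, csSup_le' ?_⟩
  rintro r ⟨x, hx, w, i, j, hw, hij, rfl⟩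
  exact gap_bound hprim hx hw hij

end Rauzy
end
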